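/- For each named GS4 derivation P with conclusion ⊢Γ,A, where A is any non-atomic named formula, the branch-labeled axiom graph of the isolation of A in P equals the branch-labeled axiom graph of P: ⟨⟨isl(P,A)⟩⟩ = ⟨⟨P⟩⟩. -/

import Mathlib

open scoped Classical

noncomputable section

namespace GS4

/-- Named classical propositional formulas over atoms `α`, with names in `ℕ`. -/
inductive NForm (α : Type) : Type
  | atom : ℕ → α → NForm α
  | or   : NForm α → NForm α → NForm α
  | and  : NForm α → NForm α → NForm α

variable {α : Type}

/-- Name-preserving De Morgan negation, w.r.t. an involution `bar` on atoms. -/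
def negF (bar : α → α) : NForm α → NForm α
  | .atom x a => .atom x (bar a)
  | .or A B => .and (negF bar A) (negF bar B)
  | .and A B => .or (negF bar A) (negF bar B)

/-- The set of names occurring in a named formula. -/
def NForm.names : NForm α → Set ℕ
  | .atom x _ => {x}
  | .or A B => A.names ∪ B.names
  | .and A B => A.names ∪ B.names

/-- A named formula is sharing-free if every name occurs at most once in it. -/
def NForm.sharingFree : NForm α → Prop
  | .atom _ _ => True
  | .or A B => A.sharingFree ∧ B.sharingFree ∧ Disjoint A.names B.names
  | .and A B => A.sharingFree ∧ B.sharingFree ∧ Disjoint A.names B.names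

def NForm.isAtom : NForm α → Prop
  | .atom _ _ => True
  | _ => False

/-- Anonymous formulas (shapes): `A ≡ B` iff their shapes coincide. -/
inductive Shape (α : Type) : Type
  | atom : α → Shape α
  | or   : Shape α → Shape α → Shape α
  | and  : Shape α → Shape α → Shape α

def NForm.shape : NForm α → Shape α
  | .atom _ a => .atom a
  | .or A B => .or A.shape B.shape
  | .and A B => .and A.shape B.shape

/-- `HasAtom A x a`: the atomic formula `x:a` occurs in `A`. -/
def HasAtom : NForm α → ℕ → α → Prop
  | .atom y b, x, a => y = x ∧ b = a
  | .or A B, x, a => HasAtom A x a ∨ HasAtom B x a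
  | .and A B, x, a => HasAtom A x a ∨ HasAtom B x a

/-- Names of a finite set of named formulas. -/
def snames (Γ : Finset (NForm α)) : Set ℕ := ⋃ A ∈ Γ, A.names

/-- A finite set of named formulas is sharing-free if all its elements are
sharing-free with pairwise disjoint name sets. -/
def SFSet (Γ : Finset (NForm α)) : Prop :=
  (∀ A ∈ Γ, A.sharingFree) ∧
  ∀ A ∈ Γ, ∀ B ∈ Γ, A ≠ B → Disjoint A.names B.names

/-- `x:a` occurs in some formula of `Γ` (i.e. `Γ[x] = a` for sharing-free `Γ`). -/
def HasAtomS (Γ : Finset (NForm α)) (x : ℕ) (a : α) : Prop :=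
  ∃ A ∈ Γ, HasAtom A x a

/-- Branch sets of named formulas. -/
def BrF : NForm α → Set (Set ℕ)
  | .atom x _ => {{x}}
  | .or A B => {X | ∃ Y ∈ BrF A, ∃ Z ∈ BrF B, X = Y ∪ Z}
  | .and A B => BrF A ∪ BrF B

/-- Branch sets of sequents (finite sharing-free sets of named formulas). -/
def BrS (Γ : Finset (NForm α)) : Set (Set ℕ) :=
  {X | X ⊆ snames Γ ∧ ∀ A ∈ Γ, X ∩ A.names ∈ BrF A}

/-! ## Branch-labeled name graphs -/

/-- A branch-labeled name graph: vertices and a relation between unordered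
pairs of vertices and branch labels. -/
structure BLGraph : Type where
  verts : Set ℕ
  rel : Sym2 ℕ → Set ℕ → Prop

/-- Well-formedness of a bl-graph: related pairs consist of distinct vertices,
labels are sets of vertices, and each edge is included in its labels. -/
def BLGraph.IsBL (G : BLGraph) : Prop :=
  ∀ e X, G.rel e X → ¬ e.IsDiag ∧ X ⊆ G.verts ∧ ∀ v ∈ e, v ∈ X

def BLGraph.Edges (G : BLGraph) : Set (Sym2 ℕ) := {e | ∃ X, G.rel e X}

def BLGraph.Br (G : BLGraph) : Set (Set ℕ) := {X | ∃ e, G.rel e X}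

def BLGraph.union (G H : BLGraph) : BLGraph :=
  ⟨G.verts ∪ H.verts, fun e X => G.rel e X ∨ H.rel e X⟩

/-- Restriction `G↾_S` of a bl-graph. -/
def BLGraph.restrict (G : BLGraph) (S : Set ℕ) : BLGraph :=
  ⟨G.verts ∩ S, fun e X => G.rel e X ∧ X ⊆ S⟩

/-- The interface-relativized edge-branch relation `e ⊰^I_G X`. -/
def BLGraph.relI (G : BLGraph) (I : Set ℕ) (e : Sym2 ℕ) (X : Set ℕ) : Prop :=
  ∃ Y, G.rel e Y ∧ X = Y \ I

/-- `z 0, …, z (n-1)` is an `X`-labeled alternating path between `G` and `H`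
through the interface `I`. -/
def AltPath (G H : BLGraph) (I X : Set ℕ) (n : ℕ) (z : ℕ → ℕ) : Prop :=
  1 < n ∧
  (∀ i < n, ∀ j < n, z i = z j → i = j) ∧
  (∀ i, 0 < i → i + 1 < n → z i ∈ I) ∧
  ((∀ i, i + 1 < n →
      (Even i → G.relI I s(z i, z (i + 1)) X) ∧ (¬ Even i → H.relI I s(z i, z (i + 1)) X)) ∨
   (∀ i, i + 1 < n →
      (Even i → H.relI I s(z i, z (i + 1)) X) ∧ (¬ Even i → G.relI I s(z i, z (i + 1)) X)))

/-- Composition of bl-graphs over an interface `I`. -/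
def BLGraph.comp (G H : BLGraph) (I : Set ℕ) : BLGraph :=
  ⟨(G.verts ∪ H.verts) \ I,
   fun e X => ∃ n z, AltPath G H I X n z ∧ z 0 ∉ I ∧ z (n - 1) ∉ I ∧
     e = s(z 0, z (n - 1))⟩

/-- The weakening operator on bl-graphs: add vertices `V` and extend every
branch label by a member of `Brs`. -/
def blwk (V : Set ℕ) (Brs : Set (Set ℕ)) (G : BLGraph) : BLGraph :=
  ⟨G.verts ∪ V, fun e X => ∃ Y Z, G.rel e Y ∧ Z ∈ Brs ∧ X = Y ∪ Z⟩

/-- The bl-identity graph `id_{A,C}` on a pair of dual formulas. -/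
def blid : NForm α → NForm α → BLGraph
  | .atom x _, .atom y _ => ⟨{x, y}, fun e X => e = s(x, y) ∧ X = {x, y}⟩
  | .or A1 A2, .and C1 C2 =>
      (blwk A2.names (BrF A2) (blid A1 C1)).union (blwk A1.names (BrF A1) (blid A2 C2))
  | .and A1 A2, .or C1 C2 =>
      (blwk C2.names (BrF C2) (blid A1 C1)).union (blwk C1.names (BrF C1) (blid A2 C2))
  | _, _ => ⟨∅, fun _ _ => False⟩

/-! ## Simple name graphs -/

/-- A simple name graph. -/
structure NGraph : Type where
  verts : Set ℕ
  edges : Set (Sym2 ℕ)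

/-- Subgraph relation `H ⊑ G`. -/
def NGraph.Sub (H G : NGraph) : Prop := H.verts ⊆ G.verts ∧ H.edges ⊆ G.edges

def NGraph.union (G H : NGraph) : NGraph := ⟨G.verts ∪ H.verts, G.edges ∪ H.edges⟩

/-- Induced subgraph `G↾_S`. -/
def NGraph.restrict (G : NGraph) (S : Set ℕ) : NGraph :=
  ⟨G.verts ∩ S, {e ∈ G.edges | ∀ v ∈ e, v ∈ S}⟩

/-- Alternating paths between simple name graphs through an interface. -/
def NAltPath (G H : NGraph) (I : Set ℕ) (n : ℕ) (z : ℕ → ℕ) : Prop :=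
  0 < n ∧
  (∀ i < n, ∀ j < n, z i = z j → i = j) ∧
  (∀ i, 0 < i → i + 1 < n → z i ∈ I) ∧
  ((∀ i, i + 1 < n →
      (Even i → s(z i, z (i + 1)) ∈ G.edges) ∧ (¬ Even i → s(z i, z (i + 1)) ∈ H.edges)) ∨
   (∀ i, i + 1 < n →
      (Even i → s(z i, z (i + 1)) ∈ H.edges) ∧ (¬ Even i → s(z i, z (i + 1)) ∈ G.edges)))

/-- Composition of simple name graphs over an interface. -/
def NGraph.comp (G H : NGraph) (I : Set ℕ) : NGraph :=
  ⟨(G.verts ∪ H.verts) \ I,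
   {e | ∃ x y, x ≠ y ∧ x ∈ (G.verts ∪ H.verts) \ I ∧ y ∈ (G.verts ∪ H.verts) \ I ∧
        e = s(x, y) ∧ ∃ n z, NAltPath G H I n z ∧ z 0 = x ∧ z (n - 1) = y}⟩

/-- The identity graph `Id_{A,C}` on a pair of dual formulas. -/
def idg : NForm α → NForm α → NGraph
  | .atom x _, .atom y _ => ⟨{x, y}, {s(x, y)}⟩
  | .or A1 A2, .and C1 C2 => (idg A1 C1).union (idg A2 C2)
  | .and A1 A2, .or C1 C2 => (idg A1 C1).union (idg A2 C2)
  | _, _ => ⟨∅, ∅⟩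

/-- The edgeless (weakening) graph on the names of `Γ`. -/
def wkg (Γ : Finset (NForm α)) : NGraph := ⟨snames Γ, ∅⟩

/-! ## Named GS4 derivations -/

/-- Named GS4 derivation trees. -/
inductive Deriv (α : Type) : Type
  | ax (Γ : Finset (NForm α)) (A C : NForm α)
  | cut (A : NForm α) (P Q : Deriv α)
  | sup (P Q : Deriv α)
  | orI (A B : NForm α) (P : Deriv α)
  | andI (A B : NForm α) (P Q : Deriv α)

/-- Conclusion of a derivation tree. -/
def concl : Deriv α → Finset (NForm α)
  | .ax Γ A C => insert A (insert C Γ)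
  | .cut A P _ => (concl P).erase A
  | .sup P _ => concl P
  | .orI A B P => insert (NForm.or A B) (((concl P).erase A).erase B)
  | .andI A B P _ => insert (NForm.and A B) ((concl P).erase A)

/-- Well-formedness of derivation trees w.r.t. the atom involution `bar`:
each rule is applied correctly to sharing-free named sequents. -/
def WF (bar : α → α) : Deriv α → Prop
  | .ax Γ A C =>
      A.shape = (negF bar C).shape ∧
      A.sharingFree ∧ C.sharingFree ∧ SFSet Γ ∧
      Disjoint A.names C.names ∧
      Disjoint A.names (snames Γ) ∧ Disjoint C.names (snames Γ)
  | .cut A P Q =>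
      WF bar P ∧ WF bar Q ∧
      ∃ Γ : Finset (NForm α), A ∉ Γ ∧ negF bar A ∉ Γ ∧
        concl P = insert A Γ ∧ concl Q = insert (negF bar A) Γ ∧
        A.sharingFree ∧ SFSet Γ ∧ Disjoint A.names (snames Γ)
  | .sup P Q => WF bar P ∧ WF bar Q ∧ concl P = concl Q
  | .orI A B P =>
      WF bar P ∧
      ∃ Γ : Finset (NForm α), A ∉ Γ ∧ B ∉ Γ ∧ A ≠ B ∧
        concl P = insert A (insert B Γ) ∧
        A.sharingFree ∧ B.sharingFree ∧ SFSet Γ ∧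
        Disjoint A.names B.names ∧
        Disjoint A.names (snames Γ) ∧ Disjoint B.names (snames Γ)
  | .andI A B P Q =>
      WF bar P ∧ WF bar Q ∧
      ∃ Γ : Finset (NForm α), A ∉ Γ ∧ B ∉ Γ ∧
        concl P = insert A Γ ∧ concl Q = insert B Γ ∧
        A.sharingFree ∧ B.sharingFree ∧ SFSet Γ ∧
        Disjoint A.names B.names ∧
        Disjoint A.names (snames Γ) ∧ Disjoint B.names (snames Γ)

/-- A derivation is cut-free if it contains no cut rule. -/
def CutFree : Deriv α → Prop
  | .ax _ _ _ => True
  | .cut _ _ _ => False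
  | .sup P Q => CutFree P ∧ CutFree Q
  | .orI _ _ P => CutFree P
  | .andI _ _ P Q => CutFree P ∧ CutFree Q

/-- The branch-labeled axiom graph `⟨⟨P⟩⟩` of a derivation. -/
def blaxg : Deriv α → BLGraph
  | .ax Γ A C => blwk (snames Γ) (BrS Γ) (blid A C)
  | .cut A P Q => BLGraph.comp (blaxg P) (blaxg Q) A.names
  | .sup P Q => (blaxg P).union (blaxg Q)
  | .orI _ _ P => blaxg P
  | .andI _ _ P Q => (blaxg P).union (blaxg Q)

/-- The (simple) axiom graph `⟦P⟧` of a derivation. -/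
def axg : Deriv α → NGraph
  | .ax Γ A C => (wkg Γ).union (idg A C)
  | .cut A P Q => NGraph.comp (axg P) (axg Q) A.names
  | .sup P Q => (axg P).union (axg Q)
  | .orI _ _ P => axg P
  | .andI _ _ P Q => (axg P).union (axg Q)

/-! ## Inversion and isolation -/

/-- Inversion of a disjunction `D ∨ E` in the conclusion. -/
def inv (D E : NForm α) : Deriv α → Deriv α
  | .ax Γ A C =>
      if A = NForm.or D E then
        match C with
        | .and C1 C2 =>
            .andI C1 C2 (.ax (insert E Γ) D C1) (.ax (insert D Γ) E C2)
        | _ => .ax Γ A C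
      else if C = NForm.or D E then
        match A with
        | .and A1 A2 =>
            .andI A1 A2 (.ax (insert E Γ) A1 D) (.ax (insert D Γ) A2 E)
        | _ => .ax Γ A C
      else
        .ax (insert D (insert E (Γ.erase (NForm.or D E)))) A C
  | .cut A P Q => .cut A (inv D E P) (inv D E Q)
  | .sup P Q => .sup (inv D E P) (inv D E Q)
  | .orI A B P => if A = D ∧ B = E then P else .orI A B (inv D E P)
  | .andI A B P Q => .andI A B (inv D E P) (inv D E Q)

/-- Left inversion of a conjunction `D ∧ E` in the conclusion. -/
def invl (D E : NForm α) : Deriv α → Deriv α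
  | .ax Γ A C =>
      if A = NForm.and D E then
        match C with
        | .or C1 C2 => .orI C1 C2 (.ax (insert C2 Γ) D C1)
        | _ => .ax Γ A C
      else if C = NForm.and D E then
        match A with
        | .or A1 A2 => .orI A1 A2 (.ax (insert A2 Γ) A1 D)
        | _ => .ax Γ A C
      else
        .ax (insert D (Γ.erase (NForm.and D E))) A C
  | .cut A P Q => .cut A (invl D E P) (invl D E Q)
  | .sup P Q => .sup (invl D E P) (invl D E Q)
  | .orI A B P => .orI A B (invl D E P)
  | .andI A B P Q => if A = D ∧ B = E then P else .andI A B (invl D E P) (invl D E Q)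

/-- Right inversion of a conjunction `D ∧ E` in the conclusion. -/
def invr (D E : NForm α) : Deriv α → Deriv α
  | .ax Γ A C =>
      if A = NForm.and D E then
        match C with
        | .or C1 C2 => .orI C1 C2 (.ax (insert C1 Γ) E C2)
        | _ => .ax Γ A C
      else if C = NForm.and D E then
        match A with
        | .or A1 A2 => .orI A1 A2 (.ax (insert A1 Γ) A2 E)
        | _ => .ax Γ A C
      else
        .ax (insert E (Γ.erase (NForm.and D E))) A C
  | .cut A P Q => .cut A (invr D E P) (invr D E Q)
  | .sup P Q => .sup (invr D E P) (invr D E Q)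
  | .orI A B P => .orI A B (invr D E P)
  | .andI A B P Q => if A = D ∧ B = E then Q else .andI A B (invr D E P) (invr D E Q)

/-- Isolation of a non-atomic formula in the conclusion. -/
def isl : NForm α → Deriv α → Deriv α
  | .or A B, P => .orI A B (inv A B P)
  | .and A B, P => .andI A B (invl A B P) (invr A B P)
  | .atom _ _, P => P

/-- Totality of a bl-graph w.r.t. a sharing-free named sequent. -/
def Total (bar : α → α) (G : BLGraph) (Γ : Finset (NForm α)) : Prop :=
  G.verts = snames Γ ∧
  G.Br = BrS Γ ∧
  ∀ x y : ℕ, s(x, y) ∈ G.Edges →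
    ∀ a b : α, HasAtomS Γ x a → HasAtomS Γ y b → a = bar b

end GS4

/-!
Write `G↾_S` for the part of a bl-graph `G` whose labels lie in `S`. Inverting a disjunction does
not change the graph. Inverting a conjunction `D ∧ E` on the left cuts it down to the labels
avoiding the names of `E`, on the right to those avoiding the names of `D`. Every label is a
branch of the conclusion, and a branch of `Γ, D ∧ E` meets exactly one of `D` and `E`, so the two
halves make up the whole graph again. The restrictions are what makes the induction go through:
composition over a cut formula does not distribute over unions, because a path could alternate
between the two halves, but it commutes with restriction to the labels avoiding names outside the
interface.
-/

namespace GS4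

open scoped SetFamily

variable {α : Type} {bar : α → α} {Γ : Finset (NForm α)} {A B C D E S : NForm α}
  {P Q : Deriv α} {G H G' H' : BLGraph} {I N X : Set ℕ}

/-! ## Names and branches -/

theorem names_negF (bar : α → α) (A : NForm α) : (negF bar A).names = A.names := by
  induction A <;> simp_all [negF, NForm.names]

theorem BrF_or (A B : NForm α) : BrF (A.or B) = BrF A ⊻ BrF B := by
  ext X
  simp only [BrF, Set.mem_ofPred_eq, Set.mem_sups, Set.sup_eq_union, eq_comm]

theorem subset_names_of_mem_BrF (hX : X ∈ BrF A) : X ⊆ A.names := by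
  induction A generalizing X with
  | atom x a => exact (Set.mem_singleton_iff.1 hX).subset
  | or A B ihA ihB =>
    obtain ⟨Y, hY, Z, hZ, rfl⟩ := hX
    exact Set.union_subset_union (ihA hY) (ihB hZ)
  | and A B ihA ihB =>
    rcases hX with hX | hX
    · exact (ihA hX).trans Set.subset_union_left
    · exact (ihB hX).trans Set.subset_union_right

theorem nonempty_of_mem_BrF (hX : X ∈ BrF A) : X.Nonempty := by
  induction A generalizing X with
  | atom x a => exact (Set.mem_singleton_iff.1 hX) ▸ Set.singleton_nonempty x
  | or A B ihA _ =>
    obtain ⟨Y, hY, Z, _, rfl⟩ := hX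
    exact (ihA hY).inl
  | and A B ihA ihB => exact hX.elim ihA ihB

theorem snames_insert (A : NForm α) (Γ : Finset (NForm α)) :
    snames (insert A Γ) = A.names ∪ snames Γ := by
  simp [snames]

theorem snames_insert_or (D E : NForm α) (Γ : Finset (NForm α)) :
    snames (insert (D.or E) Γ) = snames (insert D (insert E Γ)) := by
  simp only [snames_insert, NForm.names, Set.union_assoc]

theorem snames_insert_and (D E : NForm α) (Γ : Finset (NForm α)) :
    snames (insert (D.and E) Γ) = snames (insert D Γ) ∪ snames (insert E Γ) := by
  simp only [snames_insert, NForm.names]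
  exact Set.union_union_distrib_right _ _ _

theorem names_subset_snames (hA : A ∈ Γ) : A.names ⊆ snames Γ :=
  Set.subset_biUnion_of_mem (u := fun A : NForm α => A.names) hA

theorem BrS_insert (h : Disjoint A.names (snames Γ)) : BrS (insert A Γ) = BrF A ⊻ BrS Γ := by
  ext X
  simp only [Set.mem_sups, Set.sup_eq_union]
  constructor
  · rintro ⟨hX, hbr⟩
    refine ⟨X ∩ A.names, hbr A (Finset.mem_insert_self _ _), X ∩ snames Γ,
      ⟨Set.inter_subset_right, fun B hB => ?_⟩, ?_⟩
    · rw [Set.inter_assoc, Set.inter_eq_right.2 (names_subset_snames hB)]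
      exact hbr B (Finset.mem_insert_of_mem hB)
    · rw [← Set.inter_union_distrib_left, ← snames_insert, Set.inter_eq_left.2 hX]
  · rintro ⟨Y, hY, Z, ⟨hZ, hbr⟩, rfl⟩
    have hYA := subset_names_of_mem_BrF hY
    refine ⟨snames_insert A Γ ▸ Set.union_subset_union hYA hZ, fun B hB => ?_⟩
    rw [Set.union_inter_distrib_right]
    rcases Finset.mem_insert.1 hB with rfl | hB
    · rwa [Set.inter_eq_left.2 hYA, (h.symm.mono_left hZ).inter_eq, Set.union_empty]
    · rw [(h.mono hYA (names_subset_snames hB)).inter_eq, Set.empty_union]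
      exact hbr B hB

theorem BrS_insert_or (hDE : Disjoint D.names E.names)
    (hΓ : Disjoint (D.or E).names (snames Γ)) :
    BrS (insert (D.or E) Γ) = BrS (insert D (insert E Γ)) := by
  obtain ⟨hD, hE⟩ := Set.disjoint_union_left.1 hΓ
  have hDEΓ : Disjoint D.names (snames (insert E Γ)) :=
    snames_insert E Γ ▸ Set.disjoint_union_right.2 ⟨hDE, hD⟩
  rw [BrS_insert hΓ, BrF_or, BrS_insert hDEΓ, BrS_insert hE, Set.sups_assoc]

theorem BrS_insert_and (hΓ : Disjoint (D.and E).names (snames Γ)) :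
    BrS (insert (D.and E) Γ) = BrS (insert D Γ) ∪ BrS (insert E Γ) := by
  obtain ⟨hD, hE⟩ := Set.disjoint_union_left.1 hΓ
  rw [BrS_insert hΓ, BrF, BrS_insert hD, BrS_insert hE, Set.sups_union_left]

theorem sdiff_names_mem_BrS (h : Disjoint A.names (snames Γ)) (hX : X ∈ BrS (insert A Γ)) :
    X \ A.names ∈ BrS Γ := by
  obtain ⟨Y, hY, Z, hZ, rfl⟩ := Set.mem_sups.1 (BrS_insert h ▸ hX)
  change (Y ∪ Z) \ A.names ∈ BrS Γ
  rwa [Set.union_sdiff_distrib, Set.sdiff_eq_empty.2 (subset_names_of_mem_BrF hY),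
    Set.empty_union, (h.symm.mono_left hZ.1).sdiff_eq_left]

theorem not_subset_compl_of_mem_BrS (hA : A ∈ Γ) (hX : X ∈ BrS Γ) : ¬ X ⊆ A.namesᶜ := by
  obtain ⟨x, hx, hxA⟩ := nonempty_of_mem_BrF (hX.2 A hA)
  exact fun h => h hx hxA

theorem SFSet.mono {Δ : Finset (NForm α)} (hΓ : SFSet Γ) (h : Δ ⊆ Γ) : SFSet Δ :=
  ⟨fun A hA => hΓ.1 A (h hA), fun A hA B hB => hΓ.2 A (h hA) B (h hB)⟩

theorem SFSet.insert_of_disjoint (hΓ : SFSet Γ) (hA : A.sharingFree)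
    (h : Disjoint A.names (snames Γ)) : SFSet (insert A Γ) := by
  refine ⟨fun B hB => ?_, fun B hB C hC hBC => ?_⟩
  · rcases Finset.mem_insert.1 hB with rfl | hB
    exacts [hA, hΓ.1 B hB]
  · rcases Finset.mem_insert.1 hB with rfl | hBΓ <;>
      rcases Finset.mem_insert.1 hC with rfl | hCΓ
    · exact absurd rfl hBC
    · exact h.mono_right (names_subset_snames hCΓ)
    · exact h.symm.mono_left (names_subset_snames hBΓ)
    · exact hΓ.2 B hBΓ C hCΓ hBC

theorem SFSet.exists_eq_insert (hΓ : SFSet Γ) (hA : A ∈ Γ) :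
    ∃ Δ, A ∉ Δ ∧ Γ = insert A Δ ∧ A.sharingFree ∧ Disjoint A.names (snames Δ) := by
  refine ⟨Γ.erase A, Finset.notMem_erase A Γ, (Finset.insert_erase hA).symm, hΓ.1 A hA, ?_⟩
  simp only [snames, Set.disjoint_iUnion_right]
  intro B hB
  exact hΓ.2 A hA B (Finset.mem_of_mem_erase hB) (Finset.ne_of_mem_erase hB).symm

/-! ## Operations on branch-labeled graphs -/

namespace BLGraph

/-- The family of branch labels of `e` in `G`. It turns the clauses defining the operations on
bl-graphs into identities between set families; in particular weakening is the operation `⊻` of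
pairwise unions. -/
def labels (G : BLGraph) (e : Sym2 ℕ) : Set (Set ℕ) := {X | G.rel e X}

theorem ext_labels (hv : G.verts = H.verts) (hl : ∀ e, G.labels e = H.labels e) : G = H := by
  cases G
  cases H
  simp only [BLGraph.mk.injEq]
  exact ⟨hv, funext hl⟩

theorem labels_union (G H : BLGraph) (e : Sym2 ℕ) :
    (G.union H).labels e = G.labels e ∪ H.labels e := rfl

theorem labels_restrict (G : BLGraph) (T : Set ℕ) (e : Sym2 ℕ) :
    (G.restrict T).labels e = G.labels e ∩ 𝒫 T := rfl

theorem labels_blwk (V : Set ℕ) (F : Set (Set ℕ)) (G : BLGraph) (e : Sym2 ℕ) :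
    (blwk V F G).labels e = G.labels e ⊻ F := by
  ext X
  simp only [labels, blwk, Set.mem_ofPred_eq, Set.mem_sups, Set.sup_eq_union, eq_comm (a := X),
    exists_and_left]

theorem union_comm (G H : BLGraph) : G.union H = H.union G :=
  ext_labels (Set.union_comm _ _) fun _ => Set.union_comm _ _

theorem restrict_union (G H : BLGraph) (T : Set ℕ) :
    (G.union H).restrict T = (G.restrict T).union (H.restrict T) :=
  ext_labels (Set.union_inter_distrib_right _ _ _) fun _ => Set.union_inter_distrib_right _ _ _

theorem blwk_union (V : Set ℕ) (F : Set (Set ℕ)) (G H : BLGraph) :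
    blwk V F (G.union H) = (blwk V F G).union (blwk V F H) :=
  ext_labels (Set.union_union_distrib_right _ _ _) fun e => by
    simp only [labels_blwk, labels_union, Set.sups_union_left]

theorem blwk_union_union (V W : Set ℕ) (F K : Set (Set ℕ)) (G : BLGraph) :
    blwk (V ∪ W) (F ∪ K) G = (blwk V F G).union (blwk W K G) :=
  ext_labels (Set.union_union_distrib_left _ _ _) fun e => by
    simp only [labels_blwk, labels_union, Set.sups_union_right]

theorem blwk_blwk (V W : Set ℕ) (F K : Set (Set ℕ)) (G : BLGraph) :
    blwk V F (blwk W K G) = blwk (W ∪ V) (K ⊻ F) G :=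
  ext_labels (Set.union_assoc _ _ _) fun e => by simp only [labels_blwk, Set.sups_assoc]

theorem relI_restrict_compl (hIN : Disjoint I N) (G : BLGraph) (e : Sym2 ℕ) (X : Set ℕ) :
    (G.restrict Nᶜ).relI I e X ↔ G.relI I e X ∧ X ⊆ Nᶜ := by
  constructor
  · rintro ⟨Y, ⟨hY, hYN⟩, rfl⟩
    exact ⟨⟨Y, hY, rfl⟩, Set.sdiff_subset.trans hYN⟩
  · rintro ⟨⟨Y, hY, rfl⟩, hX⟩
    exact ⟨Y, ⟨hY, fun y hy hyN => hX ⟨hy, Set.disjoint_right.1 hIN hyN⟩ hyN⟩, rfl⟩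

end BLGraph

theorem AltPath.exists_relI {n : ℕ} {z : ℕ → ℕ} (h : AltPath G H I X n z) :
    ∃ e, G.relI I e X ∨ H.relI I e X := by
  obtain ⟨hn, _, _, hedge⟩ := h
  exact ⟨s(z 0, z 1), hedge.imp (fun h => (h 0 hn).1 Even.zero) (fun h => (h 0 hn).1 Even.zero)⟩

theorem AltPath.mono {n : ℕ} {z : ℕ → ℕ} (hG : ∀ e, G.relI I e X → G'.relI I e X)
    (hH : ∀ e, H.relI I e X → H'.relI I e X) (h : AltPath G H I X n z) :
    AltPath G' H' I X n z := by
  obtain ⟨hn, hinj, hint, hedge⟩ := h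
  exact ⟨hn, hinj, hint,
    hedge.imp (fun h i hi => (h i hi).imp (hG _ ∘ ·) (hH _ ∘ ·))
      (fun h i hi => (h i hi).imp (hH _ ∘ ·) (hG _ ∘ ·))⟩

theorem altPath_restrict_compl_iff (hIN : Disjoint I N) (G H : BLGraph) (n : ℕ) (z : ℕ → ℕ) :
    AltPath (G.restrict Nᶜ) (H.restrict Nᶜ) I X n z ↔ AltPath G H I X n z ∧ X ⊆ Nᶜ := by
  have hrel := fun (K : BLGraph) e => K.relI_restrict_compl hIN e X
  constructor
  · intro h
    obtain ⟨e, he⟩ := h.exists_relI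
    exact ⟨h.mono (fun e he => ((hrel G e).1 he).1) (fun e he => ((hrel H e).1 he).1),
      he.elim (fun he => ((hrel G e).1 he).2) (fun he => ((hrel H e).1 he).2)⟩
  · rintro ⟨h, hX⟩
    exact h.mono (fun e he => (hrel G e).2 ⟨he, hX⟩) (fun e he => (hrel H e).2 ⟨he, hX⟩)

theorem BLGraph.restrict_compl_comp (hIN : Disjoint I N) (G H : BLGraph) :
    (G.comp H I).restrict Nᶜ = (G.restrict Nᶜ).comp (H.restrict Nᶜ) I := by
  refine ext_labels ?_ fun e => Set.ext fun X => ?_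
  · simp only [restrict, comp, ← Set.union_inter_distrib_right, Set.sdiff_eq, Set.inter_right_comm]
  · have hpath := altPath_restrict_compl_iff (X := X) hIN G H
    constructor
    · rintro ⟨⟨n, z, hz, hends⟩, hX⟩
      exact ⟨n, z, (hpath n z).2 ⟨hz, hX⟩, hends⟩
    · rintro ⟨n, z, hz, hends⟩
      exact ⟨⟨n, z, ((hpath n z).1 hz).1, hends⟩, ((hpath n z).1 hz).2⟩

/-! ## Branch-labeled graphs over a sequent -/

/-- `G` is a bl-graph over the sequent `Γ`: its vertices are the names of `Γ` and its labels are
branches of `Γ`. This is the part of totality that does not say which branches occur. -/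
structure BLGraph.IsOver (G : BLGraph) (Γ : Finset (NForm α)) : Prop where
  verts_eq : G.verts = snames Γ
  br_subset : G.Br ⊆ BrS Γ

namespace BLGraph.IsOver

theorem union_and (hG : G.IsOver (insert D Γ)) (hH : H.IsOver (insert E Γ))
    (hΓ : Disjoint (D.and E).names (snames Γ)) : (G.union H).IsOver (insert (D.and E) Γ) where
  verts_eq := by rw [union, hG.verts_eq, hH.verts_eq, snames_insert_and]
  br_subset := by
    rintro X ⟨e, hX⟩
    rw [BrS_insert_and hΓ]
    exact hX.imp (fun h => hG.br_subset ⟨e, h⟩) (fun h => hH.br_subset ⟨e, h⟩)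

theorem comp_names (hG : G.IsOver (insert A Γ)) (hH : H.IsOver (insert B Γ))
    (hAB : B.names = A.names) (hΓ : Disjoint A.names (snames Γ)) :
    (G.comp H A.names).IsOver Γ where
  verts_eq := by
    rw [comp, hG.verts_eq, hH.verts_eq, snames_insert, snames_insert, hAB, Set.union_self,
      Set.union_sdiff_left, hΓ.symm.sdiff_eq_left]
  br_subset := by
    rintro X ⟨e, n, z, hz, _⟩
    obtain ⟨e, ⟨Y, hY, rfl⟩ | ⟨Y, hY, rfl⟩⟩ := hz.exists_relI
    · exact sdiff_names_mem_BrS hΓ (hG.br_subset ⟨e, hY⟩)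
    · rw [← hAB] at hΓ ⊢
      exact sdiff_names_mem_BrS hΓ (hH.br_subset ⟨e, hY⟩)

theorem restrict_compl_eq_self (hG : G.IsOver Γ) (hN : Disjoint (snames Γ) N) :
    G.restrict Nᶜ = G := by
  have hΓN : snames Γ ⊆ Nᶜ := Set.subset_compl_iff_disjoint_right.2 hN
  refine ext_labels (Set.inter_eq_left.2 (hG.verts_eq ▸ hΓN)) fun e => ?_
  exact Set.inter_eq_left.2 fun X hX => (hG.br_subset ⟨e, hX⟩).1.trans hΓN

theorem labels_restrict_compl_names (hG : G.IsOver Γ) (hA : A ∈ Γ) (e : Sym2 ℕ) :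
    (G.restrict A.namesᶜ).labels e = ∅ :=
  Set.eq_empty_of_forall_notMem fun _ ⟨hX, hXA⟩ =>
    not_subset_compl_of_mem_BrS hA (hG.br_subset ⟨e, hX⟩) hXA

theorem restrict_union_left (hG : G.IsOver (insert D Γ)) (hH : H.IsOver (insert E Γ))
    (hDE : Disjoint D.names E.names) (hE : Disjoint E.names (snames Γ)) :
    (G.union H).restrict E.namesᶜ = G := by
  have hDΓ : Disjoint (snames (insert D Γ)) E.names :=
    snames_insert D Γ ▸ Set.disjoint_union_left.2 ⟨hDE, hE.symm⟩
  rw [restrict_union, hG.restrict_compl_eq_self hDΓ]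
  refine ext_labels ?_ fun e => ?_
  · rw [union, restrict, hG.verts_eq, hH.verts_eq, snames_insert, snames_insert, ← Set.sdiff_eq,
      Set.union_sdiff_left, hE.symm.sdiff_eq_left, Set.union_assoc, Set.union_self]
  · rw [labels_union, hH.labels_restrict_compl_names (Finset.mem_insert_self E Γ),
      Set.union_empty]

theorem eq_restrict_union (hG : G.IsOver (insert D Γ)) (hH : H.IsOver (insert E Γ))
    (hDE : Disjoint D.names E.names) (hΓ : Disjoint (D.and E).names (snames Γ)) :
    G = (G.union H).restrict E.namesᶜ ∧ H = (G.union H).restrict D.namesᶜ := by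
  obtain ⟨hD, hE⟩ := Set.disjoint_union_left.1 hΓ
  exact ⟨(hG.restrict_union_left hH hDE hE).symm,
    (union_comm H G ▸ hH.restrict_union_left hG hDE.symm hD).symm⟩

theorem union_restrict_eq_self (hG : G.IsOver (insert (D.and E) Γ))
    (hDE : Disjoint D.names E.names) (hΓ : Disjoint (D.and E).names (snames Γ)) :
    (G.restrict E.namesᶜ).union (G.restrict D.namesᶜ) = G := by
  obtain ⟨hD, hE⟩ := Set.disjoint_union_left.1 hΓ
  refine ext_labels ?_ fun e => ?_
  · rw [union, restrict, restrict, ← Set.inter_union_distrib_left, ← Set.compl_inter,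
      hDE.symm.inter_eq, Set.compl_empty, Set.inter_univ]
  · rw [labels_union, labels_restrict, labels_restrict, ← Set.inter_union_distrib_left]
    refine Set.inter_eq_left.2 fun X hX => ?_
    have hbr : X ∈ BrS (insert D Γ) ∪ BrS (insert E Γ) :=
      BrS_insert_and hΓ ▸ hG.br_subset ⟨e, hX⟩
    refine hbr.imp (fun h => h.1.trans ?_) (fun h => h.1.trans ?_) <;>
      rw [snames_insert, Set.subset_compl_iff_disjoint_right, Set.disjoint_union_left]
    exacts [⟨hDE, hE.symm⟩, ⟨hDE.symm, hD.symm⟩]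

end BLGraph.IsOver

/-! ## Conclusions of derivations -/

theorem concl_cut (hA : A ∉ Γ) (h : concl P = insert A Γ) : concl (.cut A P Q) = Γ := by
  rw [concl, h, Finset.erase_insert hA]

theorem concl_orI (hAB : A ≠ B) (hA : A ∉ Γ) (hB : B ∉ Γ)
    (h : concl P = insert A (insert B Γ)) : concl (.orI A B P) = insert (A.or B) Γ := by
  rw [concl, h, Finset.erase_insert (by simp [hAB, hA]), Finset.erase_insert hB]

theorem concl_andI (hA : A ∉ Γ) (h : concl P = insert A Γ) :
    concl (.andI A B P Q) = insert (A.and B) Γ := by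
  rw [concl, h, Finset.erase_insert hA]

theorem WF.mem_concl_of_mem_concl_cut (hP : WF bar (.cut A P Q))
    (hS : S ∈ concl (.cut A P Q)) :
    S ∈ concl P ∧ S ∈ concl Q ∧ Disjoint A.names S.names := by
  obtain ⟨_, _, Γ, hA, _, hP, hQ, _, _, hAΓ⟩ := hP
  rw [concl_cut hA hP] at hS
  exact ⟨hP ▸ Finset.mem_insert_of_mem hS, hQ ▸ Finset.mem_insert_of_mem hS,
    hAΓ.mono_right (names_subset_snames hS)⟩

theorem mem_concl_of_mem_concl_orI (hS : S ∈ concl (.orI A B P)) (hne : S ≠ A.or B) :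
    S ∈ concl P :=
  Finset.mem_of_mem_erase (Finset.mem_of_mem_erase (Finset.mem_of_mem_insert_of_ne hS hne))

theorem WF.mem_concl_of_mem_concl_andI (hP : WF bar (.andI A B P Q))
    (hS : S ∈ concl (.andI A B P Q)) (hne : S ≠ A.and B) : S ∈ concl P ∧ S ∈ concl Q := by
  obtain ⟨_, _, Γ, hA, _, hP, hQ, _⟩ := hP
  rw [concl_andI hA hP] at hS
  have hΓ : S ∈ Γ := Finset.mem_of_mem_insert_of_ne hS hne
  exact ⟨hP ▸ Finset.mem_insert_of_mem hΓ, hQ ▸ Finset.mem_insert_of_mem hΓ⟩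

theorem WF.sfSet_concl (hP : WF bar P) : SFSet (concl P) := by
  induction P with
  | ax Γ A C =>
    obtain ⟨_, hA, hC, hΓ, hAC, hAΓ, hCΓ⟩ := hP
    exact (hΓ.insert_of_disjoint hC hCΓ).insert_of_disjoint hA
      (snames_insert C Γ ▸ Set.disjoint_union_right.2 ⟨hAC, hAΓ⟩)
  | cut A P Q _ _ =>
    obtain ⟨_, _, Γ, hA, _, hP, _, _, hΓ, _⟩ := hP
    rwa [concl_cut hA hP]
  | sup P Q ihP _ => exact ihP hP.1
  | orI A B P _ =>
    obtain ⟨_, Γ, hA, hB, hne, hP, hAs, hBs, hΓ, hAB, hAΓ, hBΓ⟩ := hP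
    rw [concl_orI hne hA hB hP]
    exact hΓ.insert_of_disjoint ⟨hAs, hBs, hAB⟩ (Set.disjoint_union_left.2 ⟨hAΓ, hBΓ⟩)
  | andI A B P Q _ _ =>
    obtain ⟨_, _, Γ, hA, _, hP, _, hAs, hBs, hΓ, hAB, hAΓ, hBΓ⟩ := hP
    rw [concl_andI hA hP]
    exact hΓ.insert_of_disjoint ⟨hAs, hBs, hAB⟩ (Set.disjoint_union_left.2 ⟨hAΓ, hBΓ⟩)

/-! ## Axiom graphs live over the conclusion -/

theorem labels_blid_subset (A C : NForm α) (e : Sym2 ℕ) :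
    (blid A C).labels e ⊆ BrF A ⊻ BrF C := by
  induction A generalizing C with
  | atom x a =>
    cases C with
    | atom y c =>
      rintro X ⟨_, rfl⟩
      exact Set.sup_mem_sups (Set.mem_singleton {x}) (Set.mem_singleton {y})
    | or _ _ | and _ _ => exact fun _ h => h.elim
  | or A₁ A₂ ih₁ ih₂ =>
    cases C with
    | atom _ _ | or _ _ => exact fun _ h => h.elim
    | and C₁ C₂ =>
      simp only [blid, BLGraph.labels_union, BLGraph.labels_blwk]
      rw [BrF_or, BrF, Set.sups_union_right]
      refine Set.union_subset_union ?_ ?_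
      · exact Set.sups_right_comm (BrF A₁) _ _ ▸ Set.sups_subset_right (ih₁ C₁)
      · exact Set.sups_comm (BrF A₂) _ ▸ Set.sups_right_comm (BrF A₂) _ _ ▸
          Set.sups_subset_right (ih₂ C₂)
  | and A₁ A₂ ih₁ ih₂ =>
    cases C with
    | atom _ _ | and _ _ => exact fun _ h => h.elim
    | or C₁ C₂ =>
      simp only [blid, BLGraph.labels_union, BLGraph.labels_blwk]
      rw [BrF_or, BrF, Set.sups_union_left]
      refine Set.union_subset_union ?_ ?_
      · exact Set.sups_assoc (BrF A₁) _ _ ▸ Set.sups_subset_right (ih₁ C₁)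
      · exact Set.sups_comm (BrF C₂) _ ▸ Set.sups_assoc (BrF A₂) _ _ ▸
          Set.sups_subset_right (ih₂ C₂)

theorem blid_verts (h : A.shape = (negF bar C).shape) :
    (blid A C).verts = A.names ∪ C.names := by
  induction A generalizing C with
  | atom x a =>
    cases C with
    | atom _ _ => rfl
    | or _ _ | and _ _ => simp [NForm.shape, negF] at h
  | or A₁ A₂ ih₁ ih₂ =>
    cases C with
    | atom _ _ | or _ _ => simp [NForm.shape, negF] at h
    | and C₁ C₂ =>
      simp only [NForm.shape, negF, Shape.or.injEq] at h
      simp only [blid, BLGraph.union, blwk, ih₁ h.1, ih₂ h.2, NForm.names]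
      grind
  | and A₁ A₂ ih₁ ih₂ =>
    cases C with
    | atom _ _ | and _ _ => simp [NForm.shape, negF] at h
    | or C₁ C₂ =>
      simp only [NForm.shape, negF, Shape.and.injEq] at h
      simp only [blid, BLGraph.union, blwk, ih₁ h.1, ih₂ h.2, NForm.names]
      grind

theorem isOver_blaxg_ax (hP : WF bar (.ax Γ A C)) :
    (blaxg (.ax Γ A C)).IsOver (concl (.ax Γ A C)) := by
  obtain ⟨hshape, _, _, _, hAC, hAΓ, hCΓ⟩ := hP
  refine ⟨?_, ?_⟩
  · simp only [blaxg, blwk, concl, snames_insert, blid_verts hshape, Set.union_assoc]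
  · rintro X ⟨e, hX⟩
    have hACΓ : Disjoint A.names (snames (insert C Γ)) :=
      snames_insert C Γ ▸ Set.disjoint_union_right.2 ⟨hAC, hAΓ⟩
    rw [concl, BrS_insert hACΓ, BrS_insert hCΓ, ← Set.sups_assoc]
    have hX : X ∈ (blid A C).labels e ⊻ BrS Γ :=
      BLGraph.labels_blwk (snames Γ) (BrS Γ) (blid A C) e ▸ hX
    exact Set.sups_subset_right (labels_blid_subset A C e) hX

theorem isOver_blaxg (hP : WF bar P) : (blaxg P).IsOver (concl P) := by
  induction P with
  | ax Γ A C => exact isOver_blaxg_ax hP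
  | cut A P Q ihP ihQ =>
    obtain ⟨hPw, hQw, Γ, hA, _, hP, hQ, _, _, hAΓ⟩ := hP
    rw [concl_cut hA hP]
    exact (hP ▸ ihP hPw).comp_names (hQ ▸ ihQ hQw) (names_negF bar A) hAΓ
  | sup P Q ihP ihQ =>
    obtain ⟨hPw, hQw, hPQ⟩ := hP
    have hG := ihP hPw
    have hH := hPQ ▸ ihQ hQw
    exact ⟨by rw [blaxg, BLGraph.union, hG.verts_eq, hH.verts_eq, Set.union_self, concl],
      fun X ⟨e, hX⟩ => hX.elim (hG.br_subset ⟨e, ·⟩) (hH.br_subset ⟨e, ·⟩)⟩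
  | orI A B P ihP =>
    obtain ⟨hPw, Γ, hA, hB, hne, hP, _, _, _, hAB, hAΓ, hBΓ⟩ := hP
    have hG := hP ▸ ihP hPw
    rw [concl_orI hne hA hB hP]
    exact ⟨hG.verts_eq.trans (snames_insert_or A B Γ).symm,
      BrS_insert_or hAB (Set.disjoint_union_left.2 ⟨hAΓ, hBΓ⟩) ▸ hG.br_subset⟩
  | andI A B P Q ihP ihQ =>
    obtain ⟨hPw, hQw, Γ, hA, _, hP, hQ, _, _, _, _, hAΓ, hBΓ⟩ := hP
    rw [concl_andI hA hP]
    exact (hP ▸ ihP hPw).union_and (hQ ▸ ihQ hQw) (Set.disjoint_union_left.2 ⟨hAΓ, hBΓ⟩)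

/-! ## Expansion of axioms -/

theorem blwk_snames_blwk_names (h : Disjoint A.names (snames Γ)) (G : BLGraph) :
    blwk (snames Γ) (BrS Γ) (blwk A.names (BrF A) G) =
      blwk (snames (insert A Γ)) (BrS (insert A Γ)) G := by
  rw [BLGraph.blwk_blwk, BrS_insert h, snames_insert]

theorem blaxg_ax_insert_or (hDE : Disjoint D.names E.names)
    (hΓ : Disjoint (D.or E).names (snames Γ)) (A C : NForm α) :
    blaxg (.ax (insert (D.or E) Γ) A C) = blaxg (.ax (insert D (insert E Γ)) A C) := by
  rw [blaxg, blaxg, BrS_insert_or hDE hΓ, snames_insert_or]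

theorem blaxg_ax_insert_and (hΓ : Disjoint (D.and E).names (snames Γ)) (A C : NForm α) :
    blaxg (.ax (insert (D.and E) Γ) A C) =
      (blaxg (.ax (insert D Γ) A C)).union (blaxg (.ax (insert E Γ) A C)) := by
  rw [blaxg, BrS_insert_and hΓ, snames_insert_and, BLGraph.blwk_union_union, blaxg, blaxg]

section

variable {A₁ A₂ C₁ C₂ : NForm α}

theorem blaxg_ax_or_and (hΓ : Disjoint (A₁.or A₂).names (snames Γ)) :
    blaxg (.ax Γ (A₁.or A₂) (C₁.and C₂)) =
      (blaxg (.ax (insert A₂ Γ) A₁ C₁)).union (blaxg (.ax (insert A₁ Γ) A₂ C₂)) := by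
  obtain ⟨h₁, h₂⟩ := Set.disjoint_union_left.1 hΓ
  simp only [blaxg, blid, BLGraph.blwk_union, blwk_snames_blwk_names h₁,
    blwk_snames_blwk_names h₂]

theorem blaxg_ax_and_or (hΓ : Disjoint (C₁.or C₂).names (snames Γ)) :
    blaxg (.ax Γ (A₁.and A₂) (C₁.or C₂)) =
      (blaxg (.ax (insert C₂ Γ) A₁ C₁)).union (blaxg (.ax (insert C₁ Γ) A₂ C₂)) := by
  obtain ⟨h₁, h₂⟩ := Set.disjoint_union_left.1 hΓ
  simp only [blaxg, blid, BLGraph.blwk_union, blwk_snames_blwk_names h₁,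
    blwk_snames_blwk_names h₂]

theorem WF.ax_or_and (h : WF bar (.ax Γ (A₁.or A₂) (C₁.and C₂))) :
    WF bar (.ax (insert A₂ Γ) A₁ C₁) ∧ WF bar (.ax (insert A₁ Γ) A₂ C₂) := by
  simp only [WF, NForm.shape, negF, Shape.or.injEq, NForm.sharingFree, NForm.names,
    Set.disjoint_union_left, Set.disjoint_union_right, snames_insert] at h ⊢
  obtain ⟨⟨hs₁, hs₂⟩, ⟨hA₁, hA₂, hA⟩, ⟨hC₁, hC₂, _⟩, hΓ, ⟨⟨h₁₁, h₂₁⟩, h₁₂, h₂₂⟩,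
    ⟨h₁, h₂⟩, k₁, k₂⟩ := h
  exact ⟨⟨hs₁, hA₁, hC₁, hΓ.insert_of_disjoint hA₂ h₂, h₁₁, ⟨hA, h₁⟩, h₂₁.symm, k₁⟩,
    ⟨hs₂, hA₂, hC₂, hΓ.insert_of_disjoint hA₁ h₁, h₂₂, ⟨hA.symm, h₂⟩, h₁₂.symm, k₂⟩⟩

theorem WF.ax_and_or (h : WF bar (.ax Γ (A₁.and A₂) (C₁.or C₂))) :
    WF bar (.ax (insert C₂ Γ) A₁ C₁) ∧ WF bar (.ax (insert C₁ Γ) A₂ C₂) := by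
  simp only [WF, NForm.shape, negF, Shape.and.injEq, NForm.sharingFree, NForm.names,
    Set.disjoint_union_left, Set.disjoint_union_right, snames_insert] at h ⊢
  obtain ⟨⟨hs₁, hs₂⟩, ⟨hA₁, hA₂, _⟩, ⟨hC₁, hC₂, hC⟩, hΓ, ⟨⟨h₁₁, h₂₁⟩, h₁₂, h₂₂⟩,
    ⟨h₁, h₂⟩, k₁, k₂⟩ := h
  exact ⟨⟨hs₁, hA₁, hC₁, hΓ.insert_of_disjoint hC₂ k₂, h₁₁, ⟨h₁₂, h₁⟩, hC, k₁⟩,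
    ⟨hs₂, hA₂, hC₂, hΓ.insert_of_disjoint hC₁ k₁, h₂₂, ⟨h₂₁, h₂⟩, hC.symm, k₂⟩⟩

theorem WF.ax_insert_and (h : WF bar (.ax (insert (D.and E) Γ) A C))
    (hΓ : Disjoint (D.and E).names (snames Γ)) :
    WF bar (.ax (insert D Γ) A C) ∧ WF bar (.ax (insert E Γ) A C) := by
  obtain ⟨hD, hE⟩ := Set.disjoint_union_left.1 hΓ
  simp only [WF, NForm.names, Set.disjoint_union_right, snames_insert] at h ⊢
  obtain ⟨hshape, hA, hC, hS, hAC, ⟨⟨hAD, hAE⟩, hAΓ⟩, ⟨hCD, hCE⟩, hCΓ⟩ := h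
  obtain ⟨hDs, hEs, _⟩ := hS.1 _ (Finset.mem_insert_self _ _)
  have hSΓ : SFSet Γ := hS.mono (Finset.subset_insert _ _)
  exact ⟨⟨hshape, hA, hC, hSΓ.insert_of_disjoint hDs hD, hAC, ⟨hAD, hAΓ⟩, hCD, hCΓ⟩,
    ⟨hshape, hA, hC, hSΓ.insert_of_disjoint hEs hE, hAC, ⟨hAE, hAΓ⟩, hCE, hCΓ⟩⟩

end

/-! ## Inversion -/

theorem blaxg_inv_ax (hP : WF bar (.ax Γ A C)) (hS : D.or E ∈ concl (.ax Γ A C)) :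
    blaxg (inv D E (.ax Γ A C)) = blaxg (.ax Γ A C) := by
  obtain ⟨_, _, _, hΓ, _, hAΓ, hCΓ⟩ := hP
  unfold inv
  split_ifs with hA hC
  · subst hA
    cases C with
    | atom _ _ | or _ _ => rfl
    | and C₁ C₂ => exact (blaxg_ax_or_and hAΓ).symm
  · subst hC
    cases A with
    | atom _ _ | or _ _ => rfl
    | and A₁ A₂ => exact (blaxg_ax_and_or hCΓ).symm
  · have hSΓ : D.or E ∈ Γ := by simpa [concl, Ne.symm hA, Ne.symm hC] using hS
    obtain ⟨Δ, hSΔ, rfl, ⟨_, _, hDE⟩, hΔ⟩ := hΓ.exists_eq_insert hSΓ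
    rw [Finset.erase_insert hSΔ, blaxg_ax_insert_or hDE hΔ]

theorem blaxg_inv (hP : WF bar P) (hS : D.or E ∈ concl P) : blaxg (inv D E P) = blaxg P := by
  induction P with
  | ax Γ A C => exact blaxg_inv_ax hP hS
  | cut A P Q ihP ihQ =>
    obtain ⟨hSP, hSQ, _⟩ := hP.mem_concl_of_mem_concl_cut hS
    simp only [inv, blaxg, ihP hP.1 hSP, ihQ hP.2.1 hSQ]
  | sup P Q ihP ihQ =>
    obtain ⟨hPw, hQw, hPQ⟩ := hP
    simp only [inv, blaxg, ihP hPw hS, ihQ hQw (hPQ ▸ hS)]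
  | orI A B P ihP =>
    unfold inv
    split_ifs with hAB
    · rfl
    · have hne : D.or E ≠ A.or B := by grind
      exact ihP hP.1 (mem_concl_of_mem_concl_orI hS hne)
  | andI A B P Q ihP ihQ =>
    obtain ⟨hSP, hSQ⟩ := hP.mem_concl_of_mem_concl_andI hS nofun
    simp only [inv, blaxg, ihP hP.1 hSP, ihQ hP.2.1 hSQ]

theorem blaxg_invl_invr_ax_left (hP : WF bar (.ax Γ (D.and E) C)) :
    blaxg (invl D E (.ax Γ (D.and E) C)) = (blaxg (.ax Γ (D.and E) C)).restrict E.namesᶜ ∧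
      blaxg (invr D E (.ax Γ (D.and E) C)) =
        (blaxg (.ax Γ (D.and E) C)).restrict D.namesᶜ := by
  obtain ⟨hshape, ⟨_, _, hDE⟩, _, _, hSC, hSΓ, hCΓ⟩ := id hP
  cases C with
  | atom _ _ | and _ _ => simp [NForm.shape, negF] at hshape
  | or C₁ C₂ =>
    obtain ⟨hD, hE⟩ := hP.ax_and_or
    have hΔ : Disjoint (D.and E).names (snames (insert C₁ (insert C₂ Γ))) := by
      rw [← snames_insert_or, snames_insert]
      exact Set.disjoint_union_right.2 ⟨hSC, hSΓ⟩
    have hEover := isOver_blaxg_ax hE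
    rw [concl, Finset.insert_comm C₂] at hEover
    simp only [invl, invr, if_true, blaxg_ax_and_or hCΓ]
    exact (isOver_blaxg_ax hD).eq_restrict_union hEover hDE hΔ

theorem blaxg_invl_invr_ax_right (hP : WF bar (.ax Γ A (D.and E))) :
    blaxg (invl D E (.ax Γ A (D.and E))) = (blaxg (.ax Γ A (D.and E))).restrict E.namesᶜ ∧
      blaxg (invr D E (.ax Γ A (D.and E))) =
        (blaxg (.ax Γ A (D.and E))).restrict D.namesᶜ := by
  obtain ⟨hshape, _, ⟨_, _, hDE⟩, _, hAS, hAΓ, hSΓ⟩ := id hP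
  cases A with
  | atom _ _ | and _ _ => simp [NForm.shape, negF] at hshape
  | or A₁ A₂ =>
    obtain ⟨hD, hE⟩ := hP.ax_or_and
    have hΔ : Disjoint (D.and E).names (snames (insert A₁ (insert A₂ Γ))) := by
      rw [← snames_insert_or, snames_insert]
      exact Set.disjoint_union_right.2 ⟨hAS.symm, hSΓ⟩
    have hDover := isOver_blaxg_ax hD
    have hEover := isOver_blaxg_ax hE
    rw [concl, Finset.insert_comm A₁] at hDover
    rw [concl, Finset.insert_comm A₂, Finset.insert_comm A₂] at hEover
    simp only [invl, invr, if_true, reduceCtorEq, if_false, blaxg_ax_or_and hAΓ]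
    exact hDover.eq_restrict_union hEover hDE hΔ

theorem blaxg_invl_invr_ax (hP : WF bar (.ax Γ A C)) (hS : D.and E ∈ concl (.ax Γ A C)) :
    blaxg (invl D E (.ax Γ A C)) = (blaxg (.ax Γ A C)).restrict E.namesᶜ ∧
      blaxg (invr D E (.ax Γ A C)) = (blaxg (.ax Γ A C)).restrict D.namesᶜ := by
  rcases eq_or_ne A (D.and E) with rfl | hA
  · exact blaxg_invl_invr_ax_left hP
  rcases eq_or_ne C (D.and E) with rfl | hC
  · exact blaxg_invl_invr_ax_right hP
  obtain ⟨_, _, _, hΓ, _, hAΓ, hCΓ⟩ := id hP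
  have hSΓ : D.and E ∈ Γ := by simpa [concl, hA.symm, hC.symm] using hS
  obtain ⟨Δ, hSΔ, rfl, ⟨_, _, hDE⟩, hΔ⟩ := hΓ.exists_eq_insert hSΓ
  have hAS : Disjoint A.names (D.and E).names := hAΓ.mono_right (names_subset_snames hSΓ)
  have hCS : Disjoint C.names (D.and E).names := hCΓ.mono_right (names_subset_snames hSΓ)
  have hACΔ : Disjoint (D.and E).names (snames (insert A (insert C Δ))) := by
    simp only [snames_insert, Set.disjoint_union_right]
    exact ⟨hAS.symm, hCS.symm, hΔ⟩
  obtain ⟨hD, hE⟩ := hP.ax_insert_and hΔ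
  have hDover := isOver_blaxg_ax hD
  have hEover := isOver_blaxg_ax hE
  rw [concl, Finset.insert_comm C, Finset.insert_comm A] at hDover hEover
  simp only [invl, invr, if_neg hA, if_neg hC, Finset.erase_insert hSΔ, blaxg_ax_insert_and hΔ]
  exact hDover.eq_restrict_union hEover hDE hACΔ

theorem blaxg_invl_invr (hP : WF bar P) (hS : D.and E ∈ concl P) :
    blaxg (invl D E P) = (blaxg P).restrict E.namesᶜ ∧
      blaxg (invr D E P) = (blaxg P).restrict D.namesᶜ := by
  induction P with
  | ax Γ A C => exact blaxg_invl_invr_ax hP hS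
  | cut A P Q ihP ihQ =>
    obtain ⟨hSP, hSQ, hAS⟩ := hP.mem_concl_of_mem_concl_cut hS
    obtain ⟨hAD, hAE⟩ := Set.disjoint_union_right.1 hAS
    obtain ⟨hPl, hPr⟩ := ihP hP.1 hSP
    obtain ⟨hQl, hQr⟩ := ihQ hP.2.1 hSQ
    simp only [invl, invr, blaxg, hPl, hPr, hQl, hQr, BLGraph.restrict_compl_comp hAD,
      BLGraph.restrict_compl_comp hAE, and_self]
  | sup P Q ihP ihQ =>
    obtain ⟨hPw, hQw, hPQ⟩ := hP
    obtain ⟨hPl, hPr⟩ := ihP hPw hS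
    obtain ⟨hQl, hQr⟩ := ihQ hQw (hPQ ▸ hS)
    simp only [invl, invr, blaxg, hPl, hPr, hQl, hQr, BLGraph.restrict_union, and_self]
  | orI A B P ihP => exact ihP hP.1 (mem_concl_of_mem_concl_orI hS nofun)
  | andI A B P Q ihP ihQ =>
    unfold invl invr
    split_ifs with hAB
    · obtain ⟨rfl, rfl⟩ := hAB
      obtain ⟨hPw, hQw, Γ, _, _, hP, hQ, _, _, _, hDE, hDΓ, hEΓ⟩ := hP
      exact (hP ▸ isOver_blaxg hPw).eq_restrict_union (hQ ▸ isOver_blaxg hQw) hDE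
        (Set.disjoint_union_left.2 ⟨hDΓ, hEΓ⟩)
    · have hne : D.and E ≠ A.and B := by grind
      obtain ⟨hSP, hSQ⟩ := hP.mem_concl_of_mem_concl_andI hS hne
      obtain ⟨hPl, hPr⟩ := ihP hP.1 hSP
      obtain ⟨hQl, hQr⟩ := ihQ hP.2.1 hSQ
      simp only [blaxg, hPl, hPr, hQl, hQr, BLGraph.restrict_union, and_self]

theorem blaxg_isl_general (hP : WF bar P) (hA : A ∈ concl P) (hnonatom : ¬ A.isAtom) :
    blaxg (isl A P) = blaxg P := by
  cases A with
  | atom _ _ => exact absurd trivial hnonatom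
  | or D E => exact blaxg_inv hP hA
  | and D E =>
    obtain ⟨hl, hr⟩ := blaxg_invl_invr hP hA
    obtain ⟨Γ, _, hΓ, ⟨_, _, hDE⟩, hdisj⟩ := hP.sfSet_concl.exists_eq_insert hA
    have hG := hΓ ▸ isOver_blaxg hP
    simp only [isl, blaxg, hl, hr, hG.union_restrict_eq_self hDE hdisj]

end GS4

/-- the branch-labeled axiom graph is invariant under isolation
of a non-atomic formula in the conclusion. -/
theorem GS4.blaxg_isl {α : Type} (bar : α → α)
    (hbar : Function.Involutive bar) (hfix : ∀ a, bar a ≠ a)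
    (P : GS4.Deriv α) (hP : GS4.WF bar P)
    (A : GS4.NForm α) (hA : A ∈ GS4.concl P) (hnonatom : ¬ A.isAtom) :
    GS4.blaxg (GS4.isl A P) = GS4.blaxg P :=
  GS4.blaxg_isl_general hP hA hnonatom
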